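/- arXiv:q-alg/9703012 — 2 statements merged into one kernel-verified Lean document; each statement's English description precedes it below -/
import Mathlib

section
/- The R-linear map U^{<0} ⊗_R U^{≥0} → U induced by multiplication (y ⊗ x ↦ y·x) is bijective, i.e. multiplication induces an isomorphism of R-modules from U^{<0} ⊗_R U^{≥0} onto U. -/
open scoped TensorProduct

noncomputable section

/-- The base ring `R = ℂ[[ℏ]]`. -/
abbrev R : Type := PowerSeries ℂ

/-- The formal variable `ℏ ∈ ℂ[[ℏ]]`. -/
def hbar : R := PowerSeries.X

/-- The generators `e_n` of the free algebra. -/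
def E (n : ℤ) : FreeAlgebra R ℤ := FreeAlgebra.ι R n

/-- The defining relations of `U_ℏ𝔫₊`:
`e_{m+1}e_n − e_n e_{m+1} − e_m e_{n+1} + e_{n+1}e_m = ℏ(e_m e_n + e_n e_m)`. -/
inductive ERel : FreeAlgebra R ℤ → FreeAlgebra R ℤ → Prop
  | current (m n : ℤ) :
      ERel (E (m + 1) * E n - E n * E (m + 1) - E m * E (n + 1) + E (n + 1) * E m)
        (hbar • (E m * E n + E n * E m))

/-- `U = U_ℏ𝔫₊`, the quotient of the free `R`-algebra on the `e_n`, `n ∈ ℤ`,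
by the two-sided ideal generated by the defining relations. -/
abbrev U : Type := RingQuot ERel

/-- The image of `e_n` in `U`. -/
def e (n : ℤ) : U := RingQuot.mkAlgHom R ERel (E n)

/-- `U^{≥0}`, the `R`-subalgebra of `U` generated by the `e_n` with `n ≥ 0`. -/
def Uge : Subalgebra R U := Algebra.adjoin R (Set.range fun n : ℕ => e (n : ℤ))

/-- `U^{<0}`, the `R`-subalgebra of `U` generated by the `e_n` with `n < 0`. -/
def Ult : Subalgebra R U := Algebra.adjoin R {x : U | ∃ n : ℤ, n < 0 ∧ x = e n}

/-!
Telescoping the defining relation along an antidiagonal gives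
`e (b + k + 1) * e b - e b * e (b + k + 1) = ℏ * ∑ e (b + p) * e (b + q)`, the sum being over
`p + q = k`. So modulo words of smaller total height the letters of a word commute, and the
subalgebra generated by the `e n` with `n` in an order-connected set is spanned by the ordered
monomials in these `e n`.

Ordered monomials are linearly independent because `U` acts by shuffle multiplication over `F⟦ℏ⟧`,
where `F` is the field of rational functions in variables `y i`, with structure function
`1 + ℏ / (y i - y j)`. Modulo `ℏ` the action on the vacuum yields symmetrised Laurent monomials,
which are independent, and independence lifts along `ℂ⟦ℏ⟧ → ℂ`.

The ordered monomials are therefore a basis, and cutting each of them at a lower set `I` of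
indices factors this basis into the bases of the subalgebras of `I` and of its complement.
-/

section Straightening

open Finset.HasAntidiagonal (antidiagonal)

variable {K A : Type*} [CommRing K] [Ring A] [Algebra K A] {h : K} {x : ℤ → A} {I : Set ℤ} {m : ℤ}

/-- The family `x` consists of the modes of a current satisfying the defining relation of
`U_ℏ𝔫₊` with deformation parameter `h`. -/
def IsCurrent (h : K) (x : ℤ → A) : Prop :=
  ∀ m n : ℤ, x (m + 1) * x n - x n * x (m + 1) - x m * x (n + 1) + x (n + 1) * x m =
    h • (x m * x n + x n * x m)

/-- The Poincaré–Birkhoff–Witt monomial of a multiset: the product of the `x n` in weakly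
increasing order of `n`. -/
def orderedMonomial {M : Type*} [Monoid M] (x : ℤ → M) (s : Multiset ℤ) : M :=
  ((s.sort (· ≤ ·)).map x).prod

lemma IsCurrent.mul_sub_mul_eq_sum (hx : IsCurrent h x) (h2 : IsUnit (2 : K)) (b : ℤ) (k : ℕ) :
    x (b + (k + 1)) * x b - x b * x (b + (k + 1)) =
      h • ∑ p ∈ antidiagonal k, x (b + p.1) * x (b + p.2) := by
  let c (p : ℕ × ℕ) : A := x (b + p.1) * x (b + p.2) - x (b + p.2) * x (b + p.1)
  have relation (p : ℕ × ℕ) : c (p.1 + 1, p.2) - c (p.1, p.2 + 1) =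
      h • (x (b + p.1) * x (b + p.2) + x (b + p.2) * x (b + p.1)) := by
    rw [← hx]
    simp only [c, Nat.cast_add, Nat.cast_one, ← add_assoc]
    abel
  have telescope : c (k + 1, 0) - c (0, k + 1) =
      ∑ p ∈ antidiagonal k, (c (p.1 + 1, p.2) - c (p.1, p.2 + 1)) := by
    have := (Finset.Nat.sum_antidiagonal_succ (f := c) (n := k)).symm.trans
      Finset.Nat.sum_antidiagonal_succ'
    rw [Finset.sum_sub_distrib]
    grind
  have reflect : ∑ p ∈ antidiagonal k, x (b + p.2) * x (b + p.1) =
      ∑ p ∈ antidiagonal k, x (b + p.1) * x (b + p.2) :=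
    Finset.Nat.sum_antidiagonal_swap (f := fun p => x (b + p.1) * x (b + p.2))
  simp only [relation, ← Finset.smul_sum, Finset.sum_add_distrib, reflect] at telescope
  refine h2.smul_left_cancel.1 ?_
  simp only [c, Nat.cast_add, Nat.cast_one, Nat.cast_zero, add_zero] at telescope
  rw [smul_comm, two_smul, two_smul, ← telescope]
  abel

/-- The height of a word above a lower bound `m` of its letters; a letter below `m` would count as
`0`. -/
def height (m : ℤ) (l : List ℤ) : ℕ := (l.map fun n => (n - m).toNat).sum

/-- The span of the monomials of the words in the alphabet `I` of height less than `d`; the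
defining relation is used modulo these lower terms. -/
def lowerWordSpan (x : ℤ → A) (I : Set ℤ) (m : ℤ) (d : ℕ) : Submodule K A :=
  Submodule.span K ((fun l : List ℤ => (l.map x).prod) '' {l | (∀ n ∈ l, n ∈ I) ∧ height m l < d})

variable (K) in
lemma mul_mem_lowerWordSpan {a : ℤ} (ha : a ∈ I) {d : ℕ} {y : A}
    (hy : y ∈ lowerWordSpan (K := K) x I m d) :
    x a * y ∈ lowerWordSpan (K := K) x I m ((a - m).toNat + d) := by
  suffices lowerWordSpan x I m d ≤
      (lowerWordSpan x I m ((a - m).toNat + d)).comap (LinearMap.mulLeft K (x a)) from this hy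
  refine Submodule.span_le.2 ?_
  rintro _ ⟨l, ⟨hlI, hld⟩, rfl⟩
  refine Submodule.subset_span ⟨a :: l, ⟨List.forall_mem_cons.2 ⟨ha, hlI⟩, ?_⟩, by simp⟩
  simpa [height] using hld

lemma IsCurrent.swap_sub_mem_lowerWordSpan (hx : IsCurrent h x) (h2 : IsUnit (2 : K))
    (hI : I.OrdConnected) (hm : m ∈ lowerBounds I) {a b : ℤ} (hab : b < a) {l : List ℤ}
    (hl : ∀ n ∈ a :: b :: l, n ∈ I) :
    ((a :: b :: l).map x).prod - ((b :: a :: l).map x).prod ∈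
      lowerWordSpan (K := K) x I m (height m (a :: b :: l)) := by
  simp only [List.forall_mem_cons] at hl
  obtain ⟨ha, hb, hl⟩ := hl
  obtain ⟨k, rfl⟩ : ∃ k : ℕ, a = b + (k + 1) := ⟨(a - b - 1).toNat, by omega⟩
  have commutator : (((b + (k + 1)) :: b :: l).map x).prod -
      ((b :: (b + (k + 1)) :: l).map x).prod =
      h • ∑ p ∈ antidiagonal k, (((b + p.1) :: (b + p.2) :: l).map x).prod := by
    simp only [List.map_cons, List.prod_cons, ← mul_assoc, ← sub_mul, ← Finset.sum_mul,
      hx.mul_sub_mul_eq_sum h2, smul_mul_assoc]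
  rw [commutator]
  refine Submodule.smul_mem _ _ (Submodule.sum_mem _ fun p hp => ?_)
  rw [Finset.HasAntidiagonal.mem_antidiagonal] at hp
  have hbm : m ≤ b := hm hb
  refine Submodule.subset_span ⟨_, ⟨?_, ?_⟩, rfl⟩
  · simp only [List.forall_mem_cons]
    exact ⟨hI.out hb ha ⟨by omega, by omega⟩, hI.out hb ha ⟨by omega, by omega⟩, hl⟩
  · simp only [height, List.map_cons, List.sum_cons]
    omega

lemma IsCurrent.prod_sub_prod_mem_of_perm (hx : IsCurrent h x) (h2 : IsUnit (2 : K))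
    (hI : I.OrdConnected) (hm : m ∈ lowerBounds I) {l l' : List ℤ} (hl : ∀ n ∈ l, n ∈ I)
    (hperm : l.Perm l') :
    (l.map x).prod - (l'.map x).prod ∈ lowerWordSpan (K := K) x I m (height m l) := by
  induction hperm with
  | nil => simp
  | cons a _ ih =>
    obtain ⟨ha, hl⟩ := List.forall_mem_cons.1 hl
    simpa [height, mul_sub] using mul_mem_lowerWordSpan K ha (ih hl)
  | swap a b l =>
    rcases lt_trichotomy a b with hab | rfl | hab
    · exact hx.swap_sub_mem_lowerWordSpan h2 hI hm hab hl
    · simp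
    · rw [← Submodule.neg_mem_iff, neg_sub,
        show height m (b :: a :: l) = height m (a :: b :: l) by simp [height, add_left_comm]]
      exact hx.swap_sub_mem_lowerWordSpan h2 hI hm hab fun n hn =>
        hl n ((List.Perm.swap b a l).mem_iff.1 hn)
  | @trans l₁ l₂ l₃ h₁₂ _ ih₁₂ ih₂₃ =>
    have height_eq : height m l₁ = height m l₂ := (h₁₂.map _).sum_eq
    rw [← sub_add_sub_cancel _ (l₂.map x).prod]
    exact add_mem (ih₁₂ hl) (height_eq ▸ ih₂₃ fun n hn => hl n (h₁₂.mem_iff.2 hn))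

lemma IsCurrent.prod_mem_span_orderedMonomial (hx : IsCurrent h x) (h2 : IsUnit (2 : K))
    (hI : I.OrdConnected) {l : List ℤ} (hl : ∀ n ∈ l, n ∈ I) :
    (l.map x).prod ∈ Submodule.span K (orderedMonomial x '' {s | ∀ n ∈ s, n ∈ I}) := by
  obtain ⟨m, hm⟩ : BddBelow {n | n ∈ l} := (List.finite_toSet l).bddBelow
  induction hd : height m l using Nat.strong_induction_on generalizing l with
  | _ d ih =>
  subst hd
  have hlow : lowerWordSpan x (I ∩ Set.Ici m) m (height m l) ≤
      Submodule.span K (orderedMonomial x '' {s | ∀ n ∈ s, n ∈ I}) := by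
    refine Submodule.span_le.2 ?_
    rintro _ ⟨l', ⟨hl', hlt⟩, rfl⟩
    exact ih _ hlt (fun n hn => (hl' n hn).1) (fun n hn => (hl' n hn).2) rfl
  have hsort : l.Perm ((l : Multiset ℤ).sort (· ≤ ·)) :=
    Multiset.coe_eq_coe.1 (Multiset.sort_eq _ _).symm
  have hdiff := hx.prod_sub_prod_mem_of_perm h2 (hI.inter Set.ordConnected_Ici)
    (fun _ hn => hn.2) (fun n hn => ⟨hl n hn, hm hn⟩) hsort
  rw [← sub_add_cancel (l.map x).prod]
  exact add_mem (hlow hdiff) (Submodule.subset_span ⟨l, by simpa using hl, rfl⟩)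

/-- The multisets all of whose elements lie in `I`, which index the ordered monomials of the
subalgebra generated by the modes with indices in `I`. -/
abbrev MultisetIn (I : Set ℤ) : Type := {s : Multiset ℤ // ∀ n ∈ s, n ∈ I}

theorem IsCurrent.toSubmodule_adjoin_image (hx : IsCurrent h x) (h2 : IsUnit (2 : K))
    (hI : I.OrdConnected) :
    Subalgebra.toSubmodule (Algebra.adjoin K (x '' I)) =
      Submodule.span K (Set.range fun s : MultisetIn I => orderedMonomial x s) := by
  have range_eq : (Set.range fun s : MultisetIn I => orderedMonomial x s) =
      orderedMonomial x '' {s | ∀ n ∈ s, n ∈ I} := by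
    ext y
    simp
  rw [range_eq]
  apply le_antisymm
  · rw [Algebra.adjoin_eq_span, Submonoid.closure_eq_image_prod]
    refine Submodule.span_le.2 ?_
    rintro _ ⟨w, hw, rfl⟩
    choose! index hindex using hw
    have map_index : (w.map index).map x = w := by
      rw [List.map_map]
      exact (List.map_congr_left fun y hy => (hindex y hy).2).trans (List.map_id w)
    rw [← map_index]
    exact hx.prod_mem_span_orderedMonomial h2 hI (by simpa using fun y hy => (hindex y hy).1)
  · refine Submodule.span_le.2 ?_
    rintro _ ⟨s, hs, rfl⟩
    refine Subalgebra.list_prod_mem _ fun y hy => ?_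
    obtain ⟨n, hn, rfl⟩ := List.mem_map.1 hy
    exact Algebra.subset_adjoin ⟨n, hs n (by simpa using hn), rfl⟩

lemma orderedMonomial_add {M : Type*} [Monoid M] (x : ℤ → M) {s t : Multiset ℤ}
    (hst : ∀ a ∈ s, ∀ b ∈ t, a ≤ b) :
    orderedMonomial x (s + t) = orderedMonomial x s * orderedMonomial x t := by
  have sort_add : (s + t).sort (· ≤ ·) = s.sort (· ≤ ·) ++ t.sort (· ≤ ·) := by
    refine List.Perm.eq_of_pairwise' (Multiset.pairwise_sort _ _) (List.pairwise_append.2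
      ⟨Multiset.pairwise_sort _ _, Multiset.pairwise_sort _ _, by simpa using hst⟩) ?_
    rw [← Multiset.coe_eq_coe, ← Multiset.coe_add]
    simp only [Multiset.sort_eq]
  rw [orderedMonomial, sort_add, List.map_append, List.prod_append]
  rfl

lemma injective_add_of_forall_mem_compl (I : Set ℤ) :
    Function.Injective fun p : MultisetIn I × MultisetIn Iᶜ => (p.1 + p.2 : Multiset ℤ) := by
  classical
  have filter_add (s : MultisetIn I) (t : MultisetIn Iᶜ) :
      (s + t : Multiset ℤ).filter (· ∈ I) = s := by
    rw [Multiset.filter_add, Multiset.filter_eq_self.2 s.2, Multiset.filter_eq_nil.2 t.2, add_zero]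
  rintro ⟨s, t⟩ ⟨s', t'⟩ heq
  obtain rfl : s = s' := Subtype.ext <| by
    rw [← filter_add s t, ← filter_add s' t']
    exact congrArg _ heq
  exact Prod.ext rfl (Subtype.ext (add_left_cancel heq))

theorem IsCurrent.mulMap_adjoin_image_bijective (hx : IsCurrent h x) (h2 : IsUnit (2 : K))
    (hli : LinearIndependent K (orderedMonomial x))
    (hgen : Algebra.adjoin K (Set.range x) = ⊤) (hI : IsLowerSet I) :
    Function.Bijective (Submodule.mulMap (Subalgebra.toSubmodule (Algebra.adjoin K (x '' I)))
      (Subalgebra.toSubmodule (Algebra.adjoin K (x '' Iᶜ)))) := by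
  classical
  have mul_eq (p : MultisetIn I × MultisetIn Iᶜ) :
      orderedMonomial x p.1 * orderedMonomial x p.2 = orderedMonomial x (p.1 + p.2) :=
    (orderedMonomial_add x fun a ha b hb =>
      le_of_not_ge fun hba => p.2.2 b hb (hI hba (p.1.2 a ha))).symm
  rw [hx.toSubmodule_adjoin_image h2 hI.ordConnected,
    hx.toSubmodule_adjoin_image h2 hI.compl.ordConnected]
  constructor
  · let b (J : Set ℤ) : Module.Basis (MultisetIn J) K _ :=
      Module.Basis.span (hli.comp Subtype.val Subtype.val_injective)
    refine (Submodule.LinearDisjoint.of_basis_mul _ _ (b I) (b Iᶜ) ?_).injective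
    simpa [b, Module.Basis.span_apply, mul_eq, Function.comp_def] using
      hli.comp _ (injective_add_of_forall_mem_compl I)
  · rw [← LinearMap.range_eq_top, Submodule.mulMap_range, Submodule.span_mul_span, eq_top_iff,
      ← Algebra.top_toSubmodule, ← hgen, ← Set.image_univ,
      hx.toSubmodule_adjoin_image h2 Set.ordConnected_univ]
    refine Submodule.span_mono ?_
    rintro _ ⟨s, rfl⟩
    refine ⟨_, ⟨⟨s.1.filter (· ∈ I), fun n hn => (Multiset.mem_filter.1 hn).2⟩, rfl⟩, _,
      ⟨⟨s.1.filter (· ∉ I), fun n hn => (Multiset.mem_filter.1 hn).2⟩, rfl⟩, ?_⟩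
    exact (mul_eq (_, _)).trans (congrArg _ (Multiset.filter_add_not (· ∈ I) s.1))

end Straightening

section LinearIndependence

open scoped PowerSeries

lemma linearIndependent_of_constantCoeff {k M M' ι : Type*} [CommRing k] [AddCommGroup M]
    [Module k⟦X⟧ M] [AddCommGroup M'] [Module k M']
    (hreg : IsSMulRegular M (PowerSeries.X : k⟦X⟧))
    (f : M →ₛₗ[(PowerSeries.constantCoeff : k⟦X⟧ →+* k)] M') {v : ι → M}
    (hv : LinearIndependent k (f ∘ v)) : LinearIndependent k⟦X⟧ v := by
  have X_dvd (s : Finset ι) (c : ι → k⟦X⟧) (hc : ∑ i ∈ s, c i • v i = 0) :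
      ∀ i ∈ s, PowerSeries.X ∣ c i := by
    have hfc : ∑ i ∈ s, PowerSeries.constantCoeff (c i) • f (v i) = 0 := by
      simpa [map_sum, LinearMap.map_smulₛₗ] using congrArg f hc
    exact fun i hi => PowerSeries.X_dvd_iff.2 (linearIndependent_iff'.1 hv s _ hfc i hi)
  have X_pow_dvd (n : ℕ) (s : Finset ι) : ∀ c : ι → k⟦X⟧, ∑ i ∈ s, c i • v i = 0 →
      ∀ i ∈ s, PowerSeries.X ^ n ∣ c i := by
    induction n with
    | zero => simp
    | succ n ih =>
      intro c hc
      choose! d hd using X_dvd s c hc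
      have hsum : ∑ i ∈ s, d i • v i = 0 := by
        refine hreg.right_eq_zero_of_smul ?_
        rw [Finset.smul_sum, ← hc]
        exact Finset.sum_congr rfl fun i hi => by rw [smul_smul, ← hd i hi]
      intro i hi
      rw [hd i hi, pow_succ']
      exact mul_dvd_mul_left _ (ih d hsum i hi)
  refine linearIndependent_iff'.2 fun s c hc i hi => PowerSeries.ext fun n => ?_
  exact PowerSeries.X_pow_dvd_iff.1 (X_pow_dvd (n + 1) s c hc i hi) n n.lt_succ_self

lemma linearIndependent_of_dual_ne_zero_iff {k M ι : Type*} [CommRing k] [NoZeroDivisors k]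
    [AddCommGroup M] [Module k M] {v : ι → M} (f : ι → Module.Dual k M)
    (hf : ∀ i j, f i (v j) ≠ 0 ↔ i = j) : LinearIndependent k v := by
  refine linearIndependent_iff'.2 fun s c hc i hi => ?_
  have hfc : ∑ j ∈ s, c j * f i (v j) = 0 := by
    simpa [map_sum, map_smul] using congrArg (f i) hc
  rw [Finset.sum_eq_single_of_mem i hi fun j _ hji => by
    rw [not_not.1 (mt (hf i j).1 hji.symm), mul_zero]] at hfc
  exact (mul_eq_zero.1 hfc).resolve_right ((hf i i).2 rfl)

end LinearIndependence

section Shuffle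

variable {ι A B : Type*} [DecidableEq ι]

/-- The creation operator of mode `n` in the shuffle realisation of `U_ℏ𝔫₊`: the `S`-component of
a vector is a function of the variables `x i`, `i ∈ S`, and a new variable is adjoined through
the structure function `g`. -/
def shuffleOp [CommSemiring A] (x : ι → Aˣ) (g : ι → ι → A) (n : ℤ) :
    Module.End A (Finset ι → A) where
  toFun f S := ∑ i ∈ S, ↑(x i ^ n) * (∏ j ∈ S.erase i, g i j) * f (S.erase i)
  map_add' f f' := by
    funext S
    simp only [Pi.add_apply, mul_add, Finset.sum_add_distrib]
  map_smul' a f := by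
    funext S
    simp only [Pi.smul_apply, smul_eq_mul, Finset.mul_sum, RingHom.id_apply]
    exact Finset.sum_congr rfl fun i _ => mul_left_comm _ _ _

lemma shuffleOp_apply [CommSemiring A] (x : ι → Aˣ) (g : ι → ι → A) (n : ℤ) (f : Finset ι → A)
    (S : Finset ι) : shuffleOp x g n f S =
      ∑ i ∈ S, ↑(x i ^ n) * (∏ j ∈ S.erase i, g i j) * f (S.erase i) := rfl

/-- The contribution to a product of two creation operators, at the ordered pair of new variables
`(i, j)`, that does not depend on the order of `i` and `j`. -/
def shuffleKernel [CommSemiring A] (g : ι → ι → A) (f : Finset ι → A) (S : Finset ι)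
    (i j : ι) : A :=
  (∏ l ∈ (S.erase i).erase j, g i l * g j l) * f ((S.erase i).erase j)

lemma shuffleKernel_comm [CommSemiring A] (g : ι → ι → A) (f : Finset ι → A) (S : Finset ι)
    (i j : ι) : shuffleKernel g f S i j = shuffleKernel g f S j i := by
  simp only [shuffleKernel, Finset.erase_right_comm (a := i) (b := j), mul_comm (g i _)]

lemma shuffleOp_shuffleOp_apply [CommSemiring A] (x : ι → Aˣ) (g : ι → ι → A) (m n : ℤ)
    (f : Finset ι → A) (S : Finset ι) :
    shuffleOp x g m (shuffleOp x g n f) S =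
      ∑ p ∈ S.offDiag, ↑(x p.1 ^ m) * ↑(x p.2 ^ n) * g p.1 p.2 * shuffleKernel g f S p.1 p.2 := by
  rw [Finset.sum_finset_product' S.offDiag S (fun i => S.erase i)
    (f := fun i j => ↑(x i ^ m) * ↑(x j ^ n) * g i j * shuffleKernel g f S i j)
    (by grind)]
  refine Finset.sum_congr rfl fun i _ => ?_
  rw [shuffleOp_apply, Finset.mul_sum]
  refine Finset.sum_congr rfl fun j hj => ?_
  rw [← Finset.mul_prod_erase _ _ hj, shuffleKernel, Finset.prod_mul_distrib]
  ring

lemma shuffleOp_shuffleOp_apply_swap [CommSemiring A] (x : ι → Aˣ) (g : ι → ι → A) (m n : ℤ)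
    (f : Finset ι → A) (S : Finset ι) :
    shuffleOp x g m (shuffleOp x g n f) S =
      ∑ p ∈ S.offDiag, ↑(x p.2 ^ m) * ↑(x p.1 ^ n) * g p.2 p.1 * shuffleKernel g f S p.1 p.2 := by
  rw [shuffleOp_shuffleOp_apply]
  refine Finset.sum_equiv (Equiv.prodComm ι ι) (by grind) fun p _ => ?_
  rw [shuffleKernel_comm]
  rfl

theorem isCurrent_shuffleOp {K : Type*} [CommRing K] [CommRing A] [Algebra K A] {h : K}
    {x : ι → Aˣ} {g : ι → ι → A}
    (hg : ∀ i j, i ≠ j →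
      (x i - x j - algebraMap K A h) * g i j = (x i - x j + algebraMap K A h) * g j i) :
    IsCurrent h (shuffleOp x g) := by
  intro m n
  ext1 f
  funext S
  have rhs : (h • (shuffleOp x g m * shuffleOp x g n + shuffleOp x g n * shuffleOp x g m)) f S =
      algebraMap K A h * (shuffleOp x g m (shuffleOp x g n f) S +
        shuffleOp x g n (shuffleOp x g m f) S) :=
    Algebra.smul_def _ _
  rw [rhs]
  simp only [LinearMap.add_apply, LinearMap.sub_apply, Module.End.mul_apply, Pi.add_apply,
    Pi.sub_apply]
  rw [shuffleOp_shuffleOp_apply x g (m + 1) n, shuffleOp_shuffleOp_apply_swap x g n (m + 1),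
    shuffleOp_shuffleOp_apply x g m (n + 1), shuffleOp_shuffleOp_apply_swap x g (n + 1) m,
    shuffleOp_shuffleOp_apply x g m n, shuffleOp_shuffleOp_apply_swap x g n m]
  simp only [← Finset.sum_sub_distrib, ← Finset.sum_add_distrib, Finset.mul_sum]
  refine Finset.sum_congr rfl fun p hp => ?_
  simp only [zpow_add_one, Units.val_mul]
  linear_combination ↑(x p.1 ^ m) * ↑(x p.2 ^ n) * shuffleKernel g f S p.1 p.2 *
    hg p.1 p.2 (Finset.mem_offDiag.1 hp).2.2

/-- The vector created by the word `l` from the vacuum, which is supported at `∅`. -/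
def shuffleWord [CommSemiring A] (x : ι → Aˣ) (g : ι → ι → A) (l : List ℤ) : Finset ι → A :=
  (l.map (shuffleOp x g)).prod (Pi.single ∅ 1)

lemma shuffleWord_cons [CommSemiring A] (x : ι → Aˣ) (g : ι → ι → A) (n : ℤ) (l : List ℤ) :
    shuffleWord x g (n :: l) = shuffleOp x g n (shuffleWord x g l) := rfl

lemma map_shuffleWord [CommSemiring A] [CommSemiring B] (φ : A →+* B) (x : ι → Aˣ)
    (g : ι → ι → A) (l : List ℤ) (S : Finset ι) :
    φ (shuffleWord x g l S) =
      shuffleWord (fun i => Units.map φ (x i)) (fun i j => φ (g i j)) l S := by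
  induction l generalizing S with
  | nil => simp [shuffleWord, Pi.single_apply, apply_ite φ]
  | cons n l ih =>
    simp only [shuffleWord_cons, shuffleOp_apply, map_sum, map_mul, map_prod, ih, ← map_zpow,
      Units.coe_map, MonoidHom.coe_coe]

end Shuffle

section Laurent

variable {ι : Type*}

open AddMonoidAlgebra (single)

/-- The variable `i` of the ring `k[ι →₀ ℤ]` of Laurent polynomials, as a unit. -/
def laurentVar (k : Type*) [CommSemiring k] (i : ι) : (AddMonoidAlgebra k (ι →₀ ℤ))ˣ :=
  Units.map (AddMonoidAlgebra.of k (ι →₀ ℤ)) (toUnits (Multiplicative.ofAdd (Finsupp.single i 1)))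

lemma coe_laurentVar_zpow (k : Type*) [CommSemiring k] (i : ι) (n : ℤ) :
    (↑(laurentVar k i ^ n) : AddMonoidAlgebra k (ι →₀ ℤ)) = single (Finsupp.single i n) 1 := by
  rw [laurentVar, ← map_zpow, ← map_zpow, ← ofAdd_zsmul, Finsupp.smul_single, zsmul_one]
  rfl

lemma laurentVar_injective (k : Type*) [CommSemiring k] [Nontrivial k] :
    Function.Injective (laurentVar k : ι → (AddMonoidAlgebra k (ι →₀ ℤ))ˣ) := by
  intro i j hij
  have single_eq : single (Finsupp.single i (1 : ℤ)) (1 : k) = single (Finsupp.single j 1) 1 := by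
    rw [← coe_laurentVar_zpow, ← coe_laurentVar_zpow, hij]
  exact Finsupp.single_left_injective one_ne_zero
    (AddMonoidAlgebra.single_left_injective one_ne_zero single_eq)

variable [DecidableEq ι]

lemma support_subset_and_map_eq_cons_iff {i : ι} {S : Finset ι} (hi : i ∈ S) (μ : ι →₀ ℤ) (n : ℤ)
    (t : Multiset ℤ) :
    ((-Finsupp.single i n + μ).support ⊆ S.erase i ∧
        (S.erase i).val.map (-Finsupp.single i n + μ) = t) ↔
      μ.support ⊆ S ∧ μ i = n ∧ S.val.map μ = n ::ₘ t := by
  have apply_of_ne {j : ι} (hj : j ≠ i) : (-Finsupp.single i n + μ) j = μ j := by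
    simp [Finsupp.single_eq_of_ne hj]
  have map_erase : (S.erase i).val.map (-Finsupp.single i n + μ) = (S.erase i).val.map μ :=
    Multiset.map_congr rfl fun j hj => apply_of_ne (Finset.ne_of_mem_erase hj)
  have map_eq : S.val.map μ = μ i ::ₘ (S.erase i).val.map μ := by
    rw [← Multiset.map_cons, Finset.erase_val, Multiset.cons_erase hi]
  have support_iff : (-Finsupp.single i n + μ).support ⊆ S.erase i ↔ μ i = n ∧ μ.support ⊆ S := by
    have apply_self : (-Finsupp.single i n + μ) i = -n + μ i := by simp
    simp only [Finset.subset_iff, Finsupp.mem_support_iff, Finset.mem_erase]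
    grind
  rw [support_iff, map_erase, map_eq]
  constructor
  · rintro ⟨⟨rfl, hS⟩, rfl⟩
    exact ⟨hS, rfl, rfl⟩
  · rintro ⟨hS, rfl, h⟩
    exact ⟨⟨rfl, hS⟩, (Multiset.cons_inj_right _).1 h⟩

-- Coefficients in `ℕ` rule out cancellation between the terms of the symmetrisation.
lemma coeff_shuffleWord_laurentVar_ne_zero_iff (l : List ℤ) (S : Finset ι) (μ : ι →₀ ℤ) :
    (shuffleWord (laurentVar ℕ) (fun _ _ => 1) l S).coeff μ ≠ 0 ↔
      μ.support ⊆ S ∧ S.val.map μ = l := by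
  induction l generalizing S μ with
  | nil =>
    rcases S.eq_empty_or_nonempty with rfl | hS
    · simp [shuffleWord, AddMonoidAlgebra.one_def, Finsupp.single_apply, eq_comm]
    · simp [shuffleWord, hS.ne_empty]
  | cons n l ih =>
    have coeff_eq : (shuffleWord (laurentVar ℕ) (fun _ _ => 1) (n :: l) S).coeff μ =
        ∑ i ∈ S, (shuffleWord (laurentVar ℕ) (fun _ _ => 1) l (S.erase i)).coeff
          (-Finsupp.single i n + μ) := by
      simp [shuffleWord_cons, shuffleOp_apply, coe_laurentVar_zpow, AddMonoidAlgebra.coeff_sum,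
        AddMonoidAlgebra.coeff_single_mul_apply]
    rw [coeff_eq, Ne, Finset.sum_eq_zero_iff]
    push Not
    constructor
    · rintro ⟨i, hi, hne⟩
      obtain ⟨hS, -, hmap⟩ := (support_subset_and_map_eq_cons_iff hi μ n l).1 ((ih _ _).1 hne)
      exact ⟨hS, hmap⟩
    · rintro ⟨hS, hmap⟩
      obtain ⟨i, hi, hin⟩ : ∃ i ∈ S.val, μ i = n := Multiset.mem_map.1 (by simp [hmap])
      exact ⟨i, hi, (ih _ _).2 ((support_subset_and_map_eq_cons_iff hi μ n l).2 ⟨hS, hin, hmap⟩)⟩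

end Laurent

section Independence

open scoped PowerSeries

lemma exists_support_subset_and_map_eq {B : Type*} [Zero B] (s : Multiset B) :
    ∃ (S : Finset ℕ) (μ : ℕ →₀ B), μ.support ⊆ S ∧ S.val.map μ = s := by
  classical
  induction s using Quotient.inductionOn with
  | _ l =>
  refine ⟨Finset.range l.length, l.toFinsupp, by simp [List.toFinsupp_support], ?_⟩
  change Multiset.map _ (Multiset.range _) = _
  refine congrArg _ (List.ext_getElem ?_ fun i hi hi' => ?_)
  · simp
  · simp [List.getD, hi']

lemma linearIndependent_shuffleWord_laurentVar (k : Type*) [CommRing k] [IsDomain k] [CharZero k] :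
    LinearIndependent k fun s : Multiset ℤ =>
      (shuffleWord (laurentVar k) (fun _ _ => 1) (s.sort (· ≤ ·)) :
        Finset ℕ → AddMonoidAlgebra k (ℕ →₀ ℤ)) := by
  choose S μ hμ hmap using exists_support_subset_and_map_eq (B := ℤ)
  let coeffAt (s : Multiset ℤ) : Module.Dual k (Finset ℕ → AddMonoidAlgebra k (ℕ →₀ ℤ)) :=
    Finsupp.lapply (μ s) ∘ₗ (AddMonoidAlgebra.coeffLinearEquiv k).toLinearMap ∘ₗ
      LinearMap.proj (S s)
  refine linearIndependent_of_dual_ne_zero_iff coeffAt fun s t => ?_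
  let φ := AddMonoidAlgebra.mapRingHom (ℕ →₀ ℤ) (Nat.castRingHom k)
  have map_laurentVar (i : ℕ) : Units.map φ (laurentVar ℕ i) = laurentVar k i := by
    ext1
    simp [φ, laurentVar]
  have coeffAt_eq : coeffAt s (shuffleWord (laurentVar k) (fun _ _ => 1) (t.sort (· ≤ ·))) =
      (shuffleWord (laurentVar ℕ) (fun _ _ => 1) (t.sort (· ≤ ·)) (S s)).coeff (μ s) := by
    have map_word := map_shuffleWord φ (laurentVar ℕ) (fun _ _ => 1) (t.sort (· ≤ ·)) (S s)
    simp only [map_laurentVar, map_one] at map_word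
    change (shuffleWord (laurentVar k) (fun _ _ => 1) (t.sort (· ≤ ·)) (S s)).coeff (μ s) = _
    rw [← map_word]
    simp [φ]
  rw [coeffAt_eq, Nat.cast_ne_zero, coeff_shuffleWord_laurentVar_ne_zero_iff, hmap,
    Multiset.sort_eq]
  simp [hμ]

lemma linearIndependent_shuffleWord_map_laurentVar {k B : Type*} [CommRing k] [IsDomain k]
    [CharZero k] [CommRing B] [Algebra k B] {ψ : AddMonoidAlgebra k (ℕ →₀ ℤ) →ₐ[k] B}
    (hψ : Function.Injective ψ) :
    LinearIndependent k fun s : Multiset ℤ =>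
      (shuffleWord (fun i => Units.map (ψ.toRingHom : _ →* B) (laurentVar k i)) (fun _ _ => 1)
        (s.sort (· ≤ ·)) : Finset ℕ → B) := by
  have map_word (s : Multiset ℤ) :
      ψ.toLinearMap.compLeft (Finset ℕ)
          (shuffleWord (laurentVar k) (fun _ _ => 1) (s.sort (· ≤ ·))) =
        shuffleWord (fun i => Units.map (ψ.toRingHom : _ →* B) (laurentVar k i)) (fun _ _ => 1)
          (s.sort (· ≤ ·)) := by
    funext S
    refine (map_shuffleWord ψ.toRingHom (laurentVar k) _ _ S).trans ?_
    simp only [map_one]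
  simpa only [Function.comp_def, map_word] using
    (linearIndependent_shuffleWord_laurentVar k).map' (ψ.toLinearMap.compLeft (Finset ℕ))
      (LinearMap.ker_eq_bot.2 hψ.comp_left)

variable {ι F : Type*} [Field F]

/-- The structure function `1 + ℏ / (y i - y j)` of the shuffle realisation over `F⟦ℏ⟧`, a
solution of the exchange relation of the current `e(z)` which is trivial modulo `ℏ`. Only its values
at `i ≠ j` are meaningful. -/
def yangianFactor (y : ι → Fˣ) (i j : ι) : F⟦X⟧ :=
  1 + PowerSeries.X * PowerSeries.C ((y i - y j : F)⁻¹)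

lemma yangianFactor_exchange {y : ι → Fˣ} {i j : ι} (hij : y i ≠ y j) :
    (PowerSeries.C (y i : F) - PowerSeries.C (y j : F) - PowerSeries.X) *
        yangianFactor y i j =
      (PowerSeries.C (y i : F) - PowerSeries.C (y j : F) + PowerSeries.X) *
        yangianFactor y j i := by
  have y_sub_ne_zero : (y i - y j : F) ≠ 0 := sub_ne_zero.2 (Units.val_injective.ne hij)
  have C_inv_mul : PowerSeries.C ((y i - y j : F)⁻¹) *
      (PowerSeries.C (y i : F) - PowerSeries.C (y j : F)) = 1 := by
    rw [← map_sub, ← map_mul, inv_mul_cancel₀ y_sub_ne_zero, map_one]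
  rw [yangianFactor, yangianFactor, ← neg_sub (y i : F), inv_neg, map_neg]
  linear_combination 2 * PowerSeries.X * C_inv_mul

lemma constantCoeff_yangianFactor (y : ι → Fˣ) (i j : ι) :
    PowerSeries.constantCoeff (yangianFactor y i j) = 1 := by
  simp [yangianFactor]

variable [DecidableEq ι]

/-- The creation operators of the shuffle realisation over `F⟦ℏ⟧` with variables `y`. -/
def yangianOp (y : ι → Fˣ) : ℤ → Module.End F⟦X⟧ (Finset ι → F⟦X⟧) :=
  shuffleOp (fun i => Units.map (PowerSeries.C : F →+* F⟦X⟧) (y i)) (yangianFactor y)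

theorem isCurrent_yangianOp {k : Type*} [CommRing k] [Algebra k F] {y : ι → Fˣ}
    (hy : Function.Injective y) :
    IsCurrent (PowerSeries.X : k⟦X⟧) (yangianOp y) := by
  refine isCurrent_shuffleOp fun i j hij => ?_
  rw [PowerSeries.algebraMap_apply'', PowerSeries.map_X]
  exact yangianFactor_exchange (hy.ne hij)

/-- Componentwise reduction modulo `ℏ` of the shuffle realisation. -/
def modHbar (k ι : Type*) [CommRing k] [Algebra k F] :
    (Finset ι → F⟦X⟧) →ₛₗ[(PowerSeries.constantCoeff : k⟦X⟧ →+* k)] (Finset ι → F) where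
  toFun f S := PowerSeries.constantCoeff (f S)
  map_add' f f' := by
    funext S
    exact map_add _ _ _
  map_smul' c f := by
    funext S
    have constantCoeff_map : PowerSeries.constantCoeff (PowerSeries.map (algebraMap k F) c) =
        algebraMap k F (PowerSeries.constantCoeff c) :=
      MvPowerSeries.constantCoeff_map _ _
    simp only [Pi.smul_apply, Algebra.smul_def, PowerSeries.algebraMap_apply'', map_mul,
      constantCoeff_map]

theorem linearIndependent_orderedMonomial_yangianOp {k : Type*} [CommRing k] [Algebra k F]
    {y : ι → Fˣ} (hy : LinearIndependent k fun s : Multiset ℤ =>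
      shuffleWord y (fun _ _ => 1) (s.sort (· ≤ ·))) :
    LinearIndependent k⟦X⟧ fun s => orderedMonomial (yangianOp y) s (Pi.single ∅ 1) := by
  have X_regular : IsSMulRegular (Finset ι → F⟦X⟧) (PowerSeries.X : k⟦X⟧) := by
    refine IsSMulRegular.pi fun _ f f' hff => PowerSeries.X_mul_cancel ?_
    simpa only [Algebra.smul_def, PowerSeries.algebraMap_apply'', PowerSeries.map_X] using hff
  have modHbar_eq (s : Multiset ℤ) :
      modHbar k ι (orderedMonomial (yangianOp y) s (Pi.single ∅ 1)) =
        shuffleWord y (fun _ _ => 1) (s.sort (· ≤ ·)) := by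
    funext S
    refine (map_shuffleWord (PowerSeries.constantCoeff (R := F)) _ _ _ _).trans ?_
    exact congrArg₂ (fun z g => shuffleWord z g (s.sort (· ≤ ·)) S)
      (funext fun i => Units.ext (PowerSeries.constantCoeff_C _))
      (funext₂ (constantCoeff_yangianFactor y))
  refine linearIndependent_of_constantCoeff X_regular (modHbar k ι) ?_
  simpa only [Function.comp_def, modHbar_eq] using hy

end Independence

section Yangian

variable {A : Type*} [Ring A] [Algebra R A]

lemma isCurrent_e : IsCurrent hbar e := by
  intro m n
  simpa only [map_add, map_sub, map_mul, map_smul, e] using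
    RingQuot.mkAlgHom_rel R (ERel.current m n)

/-- The homomorphism from `U` given by its universal property: a current in an `R`-algebra. -/
def IsCurrent.lift {x : ℤ → A} (hx : IsCurrent hbar x) : U →ₐ[R] A :=
  RingQuot.liftAlgHom R ⟨FreeAlgebra.lift R x, by
    rintro _ _ ⟨m, n⟩
    simpa only [map_add, map_sub, map_mul, map_smul, E, FreeAlgebra.lift_ι_apply] using hx m n⟩

lemma IsCurrent.lift_e {x : ℤ → A} (hx : IsCurrent hbar x) (n : ℤ) : hx.lift (e n) = x n := by
  rw [IsCurrent.lift, e, RingQuot.liftAlgHom_mkAlgHom_apply, E, FreeAlgebra.lift_ι_apply]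

lemma IsCurrent.lift_orderedMonomial {x : ℤ → A} (hx : IsCurrent hbar x) (s : Multiset ℤ) :
    hx.lift (orderedMonomial e s) = orderedMonomial x s := by
  simp only [orderedMonomial, map_list_prod, List.map_map, Function.comp_def, hx.lift_e]

lemma adjoin_range_e : Algebra.adjoin R (Set.range e) = ⊤ := by
  have range_eq : Set.range e = RingQuot.mkAlgHom R ERel '' Set.range (FreeAlgebra.ι R) :=
    Set.range_comp _ _
  rw [range_eq, ← AlgHom.map_adjoin, FreeAlgebra.adjoin_range_ι, Algebra.map_top,
    AlgHom.range_eq_top]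
  exact RingQuot.mkAlgHom_surjective R ERel

theorem linearIndependent_orderedMonomial_e : LinearIndependent R (orderedMonomial e) := by
  let L := AddMonoidAlgebra ℂ (ℕ →₀ ℤ)
  let F := FractionRing L
  let ψ : L →ₐ[ℂ] F := IsScalarTower.toAlgHom ℂ L F
  have ψ_injective : Function.Injective ψ := IsFractionRing.injective L F
  let y (i : ℕ) : Fˣ := Units.map (ψ.toRingHom : L →* F) (laurentVar ℂ i)
  have y_injective : Function.Injective y :=
    (Units.map_injective ψ_injective).comp (laurentVar_injective ℂ)
  have hx : IsCurrent hbar (yangianOp y) := isCurrent_yangianOp y_injective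
  let evalVacuum : U →ₗ[R] (Finset ℕ → PowerSeries F) :=
    (LinearMap.applyₗ (R := PowerSeries F) (Pi.single ∅ 1)).restrictScalars R ∘ₗ hx.lift.toLinearMap
  refine LinearIndependent.of_comp evalVacuum ?_
  have evalVacuum_orderedMonomial (s : Multiset ℤ) :
      evalVacuum (orderedMonomial e s) = orderedMonomial (yangianOp y) s (Pi.single ∅ 1) :=
    LinearMap.congr_fun (hx.lift_orderedMonomial s) _
  simpa only [Function.comp_def, evalVacuum_orderedMonomial] using
    linearIndependent_orderedMonomial_yangianOp
      (linearIndependent_shuffleWord_map_laurentVar ψ_injective)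

theorem mulMap_lt_ge_bijective_general {I : Set ℤ} (hI : IsLowerSet I) :
    Function.Bijective (Submodule.mulMap (Subalgebra.toSubmodule (Algebra.adjoin R (e '' I)))
      (Subalgebra.toSubmodule (Algebra.adjoin R (e '' Iᶜ)))) := by
  have isUnit_two : IsUnit (2 : R) := by
    simpa only [map_ofNat] using (IsUnit.mk0 (2 : ℂ) two_ne_zero).map PowerSeries.C
  exact isCurrent_e.mulMap_adjoin_image_bijective isUnit_two linearIndependent_orderedMonomial_e
    adjoin_range_e hI

lemma Ult_eq_adjoin_image : Ult = Algebra.adjoin R (e '' Set.Iio 0) := by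
  simp only [Ult, Set.image, Set.mem_Iio, eq_comm]

lemma Uge_eq_adjoin_image : Uge = Algebra.adjoin R (e '' (Set.Iio 0)ᶜ) := by
  rw [Uge, Set.compl_Iio]
  congr 1
  ext u
  constructor
  · rintro ⟨n, rfl⟩
    exact ⟨n, Int.natCast_nonneg n, rfl⟩
  · rintro ⟨n, hn, rfl⟩
    exact ⟨n.toNat, congrArg e (Int.toNat_of_nonneg hn)⟩

end Yangian

/-- multiplication induces an isomorphism of `R`-modules
`U^{<0} ⊗_R U^{≥0} → U`. -/
theorem mulMap_lt_ge_bijective :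
    Function.Bijective
      (Submodule.mulMap (Subalgebra.toSubmodule Ult) (Subalgebra.toSubmodule Uge)) := by
  rw [Ult_eq_adjoin_image, Uge_eq_adjoin_image]
  exact mulMap_lt_ge_bijective_general (isLowerSet_Iio 0)

end
end

section
/- Let Ũ^{≥0} be the associative unital R-algebra presented by generators ẽ_n (n ≥ 0) and relations ẽ_{m+1}ẽ_n − ẽ_n ẽ_{m+1} − ẽ_m ẽ_{n+1} + ẽ_{n+1} ẽ_m = ℏ(ẽ_m ẽ_n + ẽ_n ẽ_m) for all m, n ≥ 0. Then the R-algebra morphism Ũ^{≥0} → U determined by ẽ_n ↦ e_n is injective, and its image is the subalgebra U^{≥0}; in other words, these relations are defining relations for U^{≥0}. -/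
open scoped TensorProduct

noncomputable section

/-- The generators `ẽ_n`, `n ≥ 0`, of the free algebra on nonnegative modes. -/
def Et (n : ℕ) : FreeAlgebra R ℕ := FreeAlgebra.ι R n

/-- The defining relations of `Ũ^{≥0}`:
`ẽ_{m+1}ẽ_n − ẽ_n ẽ_{m+1} − ẽ_m ẽ_{n+1} + ẽ_{n+1}ẽ_m = ℏ(ẽ_m ẽ_n + ẽ_n ẽ_m)`, `m, n ≥ 0`. -/
inductive ERelT : FreeAlgebra R ℕ → FreeAlgebra R ℕ → Prop
  | current (m n : ℕ) :
      ERelT (Et (m + 1) * Et n - Et n * Et (m + 1) - Et m * Et (n + 1) + Et (n + 1) * Et m)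
        (hbar • (Et m * Et n + Et n * Et m))

/-- `Ũ^{≥0}`, the `R`-algebra presented by the generators `ẽ_n`, `n ≥ 0`,
and the above relations. -/
abbrev Ut : Type := RingQuot ERelT

/-- The image of `ẽ_n` in `Ũ^{≥0}`. -/
def et (n : ℕ) : Ut := RingQuot.mkAlgHom R ERelT (Et n)

/-!
Commutators `[x_m, x_n]` are sums of words of smaller total mode, so the ordered words in the `ẽ_n`
span `Ũ^{≥0}`, and it suffices to find a representation of `U` and a vector on which the
corresponding words in the `e_n` act linearly independently.

Such a representation exists on functions of finite sets `I` of points `t ∈ ℂˣ`: the current acts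
by the shuffle product with a delta function, weighted by the structure function
`ζ(t, s) = (t - s + ℏ) / (t - s)`, and the points are invertible so that negative modes act too.
Modulo `ℏ` the structure function is `1`, and the value at `I` of the word `e_{n_1} ⋯ e_{n_r}`
applied to the vacuum becomes `∏_{t ∈ I} D_t` applied to the monomial `X_{n_1} ⋯ X_{n_r}` and
evaluated at `X = 0`, where `D_t = ∑ t ^ n ∂/∂X_n`. These functionals separate polynomials in
the `X_n`, and linear independence modulo `ℏ` implies linear independence over `ℂ[[ℏ]]`.
-/

section Relations

variable {S A ι : Type*} [CommRing S] [Ring A] [Algebra S A]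

/-- The current relations of `U_ℏ𝔫₊`, with parameter `h`, for a family `x` of elements of an
algebra. Modes are indexed by `ℤ` for `U` and by `ℕ` for `Ũ^{≥0}`. -/
def CurrentRelations [Add ι] [One ι] (h : S) (x : ι → A) : Prop :=
  ∀ m n, x (m + 1) * x n - x n * x (m + 1) - x m * x (n + 1) + x (n + 1) * x m =
    h • (x m * x n + x n * x m)

theorem CurrentRelations.natCast {h : S} {x : ℤ → A} (hx : CurrentRelations h x) :
    CurrentRelations h fun n : ℕ => x n := fun m n => by
  simpa only [Nat.cast_add, Nat.cast_one] using hx m n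

theorem currentRelations_e : CurrentRelations hbar e := fun m n => by
  simpa only [map_add, map_sub, map_mul, map_smul] using!
    RingQuot.mkAlgHom_rel R (ERel.current m n)

theorem currentRelations_et : CurrentRelations hbar et := fun m n => by
  simpa only [map_add, map_sub, map_mul, map_smul] using!
    RingQuot.mkAlgHom_rel R (ERelT.current m n)

variable [Algebra R A]

/-- The universal property of `U`: the morphism `e_n ↦ x n` for a solution `x` of the current
relations. -/
def liftU {x : ℤ → A} (hx : CurrentRelations hbar x) : U →ₐ[R] A :=
  RingQuot.liftAlgHom R ⟨FreeAlgebra.lift R x, by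
    rintro _ _ ⟨m, n⟩
    simpa only [map_add, map_sub, map_mul, map_smul, E, FreeAlgebra.lift_ι_apply] using hx m n⟩

theorem liftU_e {x : ℤ → A} (hx : CurrentRelations hbar x) (n : ℤ) : liftU hx (e n) = x n := by
  simp [liftU, e, E]

/-- The universal property of `Ũ^{≥0}`: the morphism `ẽ_n ↦ x n` for a solution `x` of the current
relations in nonnegative modes. -/
def liftUt {x : ℕ → A} (hx : CurrentRelations hbar x) : Ut →ₐ[R] A :=
  RingQuot.liftAlgHom R ⟨FreeAlgebra.lift R x, by
    rintro _ _ ⟨m, n⟩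
    simpa only [map_add, map_sub, map_mul, map_smul, Et, FreeAlgebra.lift_ι_apply] using hx m n⟩

theorem liftUt_et {x : ℕ → A} (hx : CurrentRelations hbar x) (n : ℕ) :
    liftUt hx (et n) = x n := by
  simp [liftUt, et, Et]

/-- The canonical morphism `Ũ^{≥0} → U`, `ẽ_n ↦ e_n`. -/
def tildeHom : Ut →ₐ[R] U := liftUt currentRelations_e.natCast

theorem tildeHom_et (n : ℕ) : tildeHom (et n) = e n := liftUt_et _ n

theorem adjoin_range_et : Algebra.adjoin R (Set.range et) = ⊤ := by
  have hrange : Set.range et =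
      RingQuot.mkAlgHom R ERelT '' Set.range (FreeAlgebra.ι R) := Set.range_comp _ _
  rw [hrange, ← AlgHom.map_adjoin, FreeAlgebra.adjoin_range_ι, Algebra.map_top,
    AlgHom.range_eq_top]
  exact RingQuot.mkAlgHom_surjective R ERelT

theorem tildeHom_range : tildeHom.range = Uge := by
  rw [← Algebra.map_top, ← adjoin_range_et, AlgHom.map_adjoin, ← Set.range_comp, Uge]
  simp only [Function.comp_def, tildeHom_et]

end Relations

section OrderedWords

variable {S A : Type*} [CommRing S] [Ring A] [Algebra S A] {h : S} {x : ℕ → A}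

variable (S x) in
/-- The span of the words in the `x_n` of total mode less than `d`: the lower-order terms of the
straightening argument. -/
def wordsBelow (d : ℕ) : Submodule S A :=
  Submodule.span S {y | ∃ l : List ℕ, l.sum < d ∧ (l.map x).prod = y}

theorem word_mem_wordsBelow {l : List ℕ} {d : ℕ} (hl : l.sum < d) :
    (l.map x).prod ∈ wordsBelow S x d :=
  Submodule.subset_span ⟨l, hl, rfl⟩

theorem word_mul_mul_word_mem_wordsBelow {d : ℕ} {y : A} (hy : y ∈ wordsBelow S x d)
    (u v : List ℕ) :
    (u.map x).prod * y * (v.map x).prod ∈ wordsBelow S x (u.sum + d + v.sum) := by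
  suffices wordsBelow S x d ≤ (wordsBelow S x (u.sum + d + v.sum)).comap
      (LinearMap.mulRight S (v.map x).prod ∘ₗ LinearMap.mulLeft S (u.map x).prod) from this hy
  refine Submodule.span_le.2 ?_
  rintro _ ⟨l, hl, rfl⟩
  have hword : (u.map x).prod * (l.map x).prod * (v.map x).prod =
      ((u ++ l ++ v).map x).prod := by simp [mul_assoc]
  simpa only [Submodule.comap_coe, Set.mem_preimage, LinearMap.comp_apply,
    LinearMap.mulLeft_apply, LinearMap.mulRight_apply, hword, SetLike.mem_coe] using
    word_mem_wordsBelow (S := S) (x := x) (l := u ++ l ++ v) (by simp only [List.sum_append]; lia)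

theorem CurrentRelations.commutator_sub_shift_mem (hx : CurrentRelations h x) (m n : ℕ) :
    ⁅x (m + 1), x n⁆ - ⁅x m, x (n + 1)⁆ ∈ wordsBelow S x (m + 1 + n) := by
  have hrel : ⁅x (m + 1), x n⁆ - ⁅x m, x (n + 1)⁆ = h • (x m * x n + x n * x m) := by
    rw [← hx m n, Ring.lie_def, Ring.lie_def]
    abel
  have hmem (i j : ℕ) (hij : i + j < m + 1 + n) : x i * x j ∈ wordsBelow S x (m + 1 + n) := by
    simpa using word_mem_wordsBelow (S := S) (x := x) (l := [i, j]) (by simpa using hij)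
  rw [hrel]
  exact Submodule.smul_mem _ _
    (Submodule.add_mem _ (hmem m n (by lia)) (hmem n m (by lia)))

theorem CurrentRelations.commutator_sub_commutator_zero_mem (hx : CurrentRelations h x)
    (m n : ℕ) : ⁅x m, x n⁆ - ⁅x (m + n), x 0⁆ ∈ wordsBelow S x (m + n) := by
  induction n generalizing m with
  | zero => simp
  | succ n ih =>
    have hsucc := Submodule.sub_mem _ (ih (m + 1)) (hx.commutator_sub_shift_mem m n)
    rw [add_right_comm m 1 n, add_assoc m n 1] at hsucc
    convert hsucc using 1
    abel

theorem CurrentRelations.commutator_mem (hx : CurrentRelations h x) (h2 : IsUnit (2 : S))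
    (m n : ℕ) : ⁅x m, x n⁆ ∈ wordsBelow S x (m + n) := by
  have hnm := hx.commutator_sub_commutator_zero_mem n m
  rw [add_comm n m] at hnm
  rw [← Submodule.smul_mem_iff_of_isUnit _ h2]
  convert Submodule.sub_mem _ (hx.commutator_sub_commutator_zero_mem m n) hnm using 1
  simp only [Ring.lie_def, two_smul]
  abel

theorem CurrentRelations.word_sub_word_mem_of_perm (hx : CurrentRelations h x)
    (h2 : IsUnit (2 : S)) {l l' : List ℕ} (hl : l.Perm l') :
    (l.map x).prod - (l'.map x).prod ∈ wordsBelow S x l.sum := by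
  induction hl with
  | nil => simp
  | cons a _ ih => simpa [mul_sub] using word_mul_mul_word_mem_wordsBelow ih [a] []
  | swap a b l =>
    simpa [Ring.lie_def, sub_mul, mul_assoc, add_assoc] using
      word_mul_mul_word_mem_wordsBelow (hx.commutator_mem h2 b a) [] l
  | trans hl₁ _ ih₁ ih₂ =>
    rw [← hl₁.sum_eq] at ih₂
    simpa only [sub_add_sub_cancel] using Submodule.add_mem _ ih₁ ih₂

theorem CurrentRelations.word_mem_span_multiset_words (hx : CurrentRelations h x)
    (h2 : IsUnit (2 : S)) (l : List ℕ) :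
    (l.map x).prod ∈
      Submodule.span S (Set.range fun m : Multiset ℕ => (m.toList.map x).prod) := by
  induction hd : l.sum using Nat.strong_induction_on generalizing l with
  | _ d ih =>
    subst hd
    have hperm : l.Perm (l : Multiset ℕ).toList := Multiset.coe_eq_coe.mp (by simp)
    have hlower : wordsBelow S x l.sum ≤
        Submodule.span S (Set.range fun m : Multiset ℕ => (m.toList.map x).prod) := by
      refine Submodule.span_le.2 ?_
      rintro _ ⟨l', hl', rfl⟩
      exact ih _ hl' l' rfl
    simpa using Submodule.add_mem _ (hlower (hx.word_sub_word_mem_of_perm h2 hperm))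
      (Submodule.subset_span ⟨(l : Multiset ℕ), rfl⟩)

theorem CurrentRelations.adjoin_le_span_multiset_words (hx : CurrentRelations h x)
    (h2 : IsUnit (2 : S)) :
    Subalgebra.toSubmodule (Algebra.adjoin S (Set.range x)) ≤
      Submodule.span S (Set.range fun m : Multiset ℕ => (m.toList.map x).prod) := by
  rw [Algebra.adjoin_eq_span, ← FreeMonoid.mrange_lift, Submodule.span_le]
  rintro _ ⟨w, rfl⟩
  simpa [FreeMonoid.lift_apply] using hx.word_mem_span_multiset_words h2 w.toList

theorem span_multiset_words_et :
    Submodule.span R (Set.range fun m : Multiset ℕ => (m.toList.map et).prod) = ⊤ := by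
  have htwo : IsUnit (2 : R) := by
    simpa only [map_ofNat] using (IsUnit.mk0 (2 : ℂ) two_ne_zero).map (algebraMap ℂ R)
  have hle := currentRelations_et.adjoin_le_span_multiset_words htwo
  rwa [adjoin_range_et, Algebra.top_toSubmodule, top_le_iff] at hle

end OrderedWords

section PowerSeries

open PowerSeries

theorem linearIndependent_of_constantCoeff_s3 {k ι α : Type*} [CommRing k]
    {v : ι → α → k⟦X⟧} (hv : LinearIndependent k fun i a => constantCoeff (v i a)) :
    LinearIndependent k⟦X⟧ v := by
  rw [linearIndependent_iff] at hv ⊢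
  intro c hc
  ext i n
  induction n using Nat.strong_induction_on generalizing i with
  | _ n ih =>
    have hcoeff : c.mapRange (coeff n) (map_zero _) = 0 := by
      refine hv _ (funext fun a => ?_)
      have hca := congrArg (coeff n) (congrFun hc a)
      simp only [Finsupp.linearCombination_apply, Finsupp.sum, Finset.sum_apply, Pi.smul_apply,
        smul_eq_mul, Pi.zero_apply, map_zero, map_sum] at hca
      rw [Finsupp.linearCombination_apply, Finsupp.sum_mapRange_index (by simp), Finsupp.sum,
        Finset.sum_apply, Pi.zero_apply, ← hca]
      refine Finset.sum_congr rfl fun j _ => ?_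
      rw [coeff_mul, Finset.sum_eq_single (n, 0)]
      · simp
      · intro p hp hne
        rw [Finset.HasAntidiagonal.mem_antidiagonal] at hp
        have hlt : p.1 < n := by grind
        rw [show coeff p.1 (c j) = 0 by simpa using ih p.1 hlt j, zero_mul]
      · simp
    simpa using DFunLike.congr_fun hcoeff i

end PowerSeries

section PointPairing

open MvPolynomial

variable {k : Type*} [Field k]

/-- The derivation `D_t = ∑ₙ tⁿ ∂/∂Xₙ` of `k[X₀, X₁, …]`, that is, `Xₙ ↦ tⁿ`. -/
def pointDerivation (t : k) : Derivation k (MvPolynomial ℕ k) (MvPolynomial ℕ k) :=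
  mkDerivation k fun n => C (t ^ n)

theorem pointDerivation_X (t : k) (n : ℕ) : pointDerivation t (X n) = C (t ^ n) :=
  mkDerivation_X ..

theorem pointDerivation_commute (s t : k) :
    Commute (pointDerivation s : Module.End k (MvPolynomial ℕ k)) (pointDerivation t) := by
  have hlie : ⁅pointDerivation s, pointDerivation t⁆ = 0 :=
    derivation_ext fun n => by simp [Derivation.commutator_apply, pointDerivation_X]
  rw [commute_iff_lie_eq, ← Derivation.commutator_coe_linear_map, hlie,
    Derivation.coe_zero_linearMap]

theorem pointDerivation_eq_sum (t : k) (p : MvPolynomial ℕ k) :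
    pointDerivation t p = ∑ n ∈ p.vars, t ^ n • pderiv n p := by
  let D : Derivation k (MvPolynomial ℕ k) (MvPolynomial ℕ k) :=
    ∑ n ∈ p.vars, t ^ n • pderiv n
  have hD (q : MvPolynomial ℕ k) : D q = ∑ n ∈ p.vars, t ^ n • pderiv n q :=
    (congrFun (map_sum Derivation.coeFnAddMonoidHom (fun n => t ^ n • pderiv n) p.vars) q).trans
      (Finset.sum_apply ..)
  rw [← hD]
  refine derivation_eq_of_forall_mem_vars fun i hi => ?_
  rw [hD, pointDerivation_X, Finset.sum_eq_single_of_mem i hi fun j _ hj => by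
    rw [pderiv_X_of_ne hj.symm, smul_zero], pderiv_X_self, smul_eq_C_mul, mul_one]

theorem pointDerivation_pairwise_commute (I : Set kˣ) : I.Pairwise (Function.onFun Commute
    fun t : kˣ => (pointDerivation (t : k) : Module.End k (MvPolynomial ℕ k))) :=
  fun _ _ _ _ _ => pointDerivation_commute _ _

/-- The functional `p ↦ ((∏_{t ∈ I} D_t) p)(0)`. The points are units of `k` because they are the
points at which the modes of all integer degrees are evaluated. -/
def pointPairing (I : Finset kˣ) : MvPolynomial ℕ k →ₗ[k] k :=
  lcoeff k 0 ∘ₗ I.noncommProd _ (pointDerivation_pairwise_commute _)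

theorem pointPairing_empty (p : MvPolynomial ℕ k) : pointPairing ∅ p = coeff 0 p := rfl

theorem pointPairing_insert [DecidableEq kˣ] {I : Finset kˣ} {t : kˣ} (ht : t ∉ I)
    (p : MvPolynomial ℕ k) :
    pointPairing (insert t I) p = pointPairing I (pointDerivation (t : k) p) := by
  rw [pointPairing, Finset.noncommProd_insert_of_notMem' _ _ _ _ ht]
  rfl

theorem pointPairing_X_mul [DecidableEq kˣ] (I : Finset kˣ) (n : ℕ) (p : MvPolynomial ℕ k) :
    pointPairing I (X n * p) = ∑ t ∈ I, (t : k) ^ n * pointPairing (I.erase t) p := by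
  induction I using Finset.induction_on generalizing p with
  | empty => simp [pointPairing_empty, coeff_X_mul']
  | insert t I ht ih =>
    have hLeibniz : pointDerivation (t : k) (X n * p) =
        X n * pointDerivation (t : k) p + (t : k) ^ n • p := by
      rw [Derivation.leibniz, pointDerivation_X, smul_eq_mul, smul_eq_mul, smul_eq_C_mul,
        mul_comm p]
    rw [pointPairing_insert ht, hLeibniz, map_add, map_smul, ih, Finset.sum_insert ht,
      Finset.erase_insert ht, smul_eq_mul, add_comm]
    congr 1
    refine Finset.sum_congr rfl fun s hs => ?_
    rw [Finset.erase_insert_of_ne (by rintro rfl; exact ht hs),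
      pointPairing_insert (by simp [ht])]

theorem pointPairing_pderiv_eq_zero [Infinite k] {p : MvPolynomial ℕ k}
    (hp : ∀ I, pointPairing I p = 0) (n : ℕ) (I : Finset kˣ) :
    pointPairing I (pderiv n p) = 0 := by
  classical
  -- `pointPairing (insert t I) p` is polynomial in the new point `t`, with infinitely many roots.
  let q : Polynomial k := ∑ i ∈ p.vars, Polynomial.monomial i (pointPairing I (pderiv i p))
  have hroot : ∀ t ∉ insert 0 ((↑) '' (I : Set kˣ) : Set k), q.IsRoot t := by
    intro t ht
    rw [Set.mem_insert_iff, not_or] at ht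
    lift t to kˣ using isUnit_iff_ne_zero.2 ht.1
    have htI : t ∉ I := fun h => ht.2 (Set.mem_image_of_mem _ h)
    rw [Polynomial.IsRoot.def, ← hp (insert t I), pointPairing_insert htI, pointDerivation_eq_sum,
      map_sum, Polynomial.eval_finsetSum]
    simp only [Polynomial.eval_monomial, map_smul, smul_eq_mul, mul_comm]
  have hq : q = 0 := Polynomial.eq_zero_of_infinite_isRoot q <|
    ((I.finite_toSet.image _).insert 0).infinite_compl.mono hroot
  by_cases hn : n ∈ p.vars
  · simpa [q, Polynomial.coeff_monomial, hn] using congrArg (Polynomial.coeff · n) hq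
  · rw [pderiv_eq_zero_of_notMem_vars hn, map_zero]

theorem eq_zero_of_forall_pointPairing_eq_zero [CharZero k] {p : MvPolynomial ℕ k}
    (hp : ∀ I, pointPairing I p = 0) : p = 0 := by
  ext s
  obtain ⟨m, rfl⟩ := Multiset.toFinsupp.surjective s
  induction m using Multiset.induction generalizing p with
  | empty => simpa [pointPairing_empty] using hp ∅
  | cons n m ih =>
    have hcoeff := ih (pointPairing_pderiv_eq_zero hp n)
    rw [coeff_pderiv, coeff_zero, mul_eq_zero] at hcoeff
    rw [← Multiset.singleton_add, add_comm, map_add, Multiset.toFinsupp_singleton]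
    exact hcoeff.resolve_right (Nat.cast_add_one_ne_zero _)

theorem word_X_eq_monomial (m : Multiset ℕ) :
    ((m.toList.map X).prod : MvPolynomial ℕ k) = monomial m.toFinsupp 1 := by
  rw [← Multiset.prod_coe, ← Multiset.map_coe, Multiset.coe_toList]
  induction m using Multiset.induction with
  | empty => simp
  | cons n m ih =>
    rw [Multiset.map_cons, Multiset.prod_cons, ih, X, monomial_mul, one_mul,
      ← Multiset.singleton_add, map_add, Multiset.toFinsupp_singleton]

theorem linearIndependent_pointPairing_words [CharZero k] :
    LinearIndependent k fun (m : Multiset ℕ) (I : Finset kˣ) =>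
      pointPairing I ((m.toList.map X).prod : MvPolynomial ℕ k) := by
  have hmon : LinearIndependent k fun m : Multiset ℕ =>
      ((m.toList.map X).prod : MvPolynomial ℕ k) := by
    simp only [word_X_eq_monomial]
    exact (basisMonomials ℕ k).linearIndependent.comp _ Multiset.toFinsupp.injective
  exact hmon.map' (LinearMap.pi pointPairing) <| LinearMap.ker_eq_bot'.2 fun p hp =>
    eq_zero_of_forall_pointPairing_eq_zero (congrFun hp)

end PointPairing

section FockRepresentation

theorem sum_sum_erase_eq_zero {α M : Type*} [DecidableEq α] [AddCommGroup M] (I : Finset α)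
    {f : α → α → M} (hf : ∀ t s, t ≠ s → f t s + f s t = 0) :
    ∑ t ∈ I, ∑ s ∈ I.erase t, f t s = 0 := by
  rw [Finset.sum_sigma']
  refine Finset.sum_involution (fun p _ => ⟨p.2, p.1⟩) ?_ ?_ ?_ ?_
  all_goals simp only [Finset.mem_sigma, Finset.mem_erase]
  · exact fun p hp => hf _ _ hp.2.1.symm
  · grind
  · grind
  · simp

variable {k S : Type*} [Field k] [CommRing S] [Algebra k S]

/-- The structure function `ζ(t, s) = (t - s + h) / (t - s)` of the shuffle product; for `t = s` it
has the junk value `1`, but it is only used at distinct points. -/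
def zetaFactor (h : S) (t s : kˣ) : S := 1 + ((t : k) - s)⁻¹ • h

theorem sub_smul_zetaFactor (h : S) {t s : kˣ} (hts : t ≠ s) :
    ((t : k) - s) • zetaFactor h t s = ((t : k) - s) • 1 + h := by
  rw [zetaFactor, smul_add, smul_inv_smul₀ (sub_ne_zero.2 (Units.val_injective.ne hts))]

theorem zetaFactor_antisymm (h : S) {t s : kˣ} (hts : t ≠ s) :
    ((t : k) - s) • zetaFactor h t s - h * zetaFactor h t s =
      -(((s : k) - t) • zetaFactor h s t - h * zetaFactor h s t) := by
  rw [sub_smul_zetaFactor h hts, sub_smul_zetaFactor h hts.symm, zetaFactor, zetaFactor,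
    ← neg_sub (t : k) s, inv_neg, neg_smul, neg_smul]
  ring

/-- The weight `∏_{s ∈ I} ζ(t, s)` of adding the point `t` to `I`. -/
def zetaProd (h : S) (t : kˣ) (I : Finset kˣ) : S := ∏ s ∈ I, zetaFactor h t s

variable [DecidableEq kˣ]

/-- The mode `n` of the current acting on functions of finite point sets: the shuffle product with
the function `t ↦ tⁿ` of one point. -/
def creation (h : S) (n : ℤ) : Module.End S (Finset kˣ → S) where
  toFun F I := ∑ t ∈ I, ((t ^ n : kˣ) : k) • (zetaProd h t (I.erase t) * F (I.erase t))
  map_add' F G := by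
    ext I
    simp only [Pi.add_apply, mul_add, smul_add, Finset.sum_add_distrib]
  map_smul' c F := by
    ext I
    simp only [Pi.smul_apply, smul_eq_mul, RingHom.id_apply, mul_left_comm _ c, Finset.mul_sum,
      mul_smul_comm]

theorem creation_apply (h : S) (n : ℤ) (F : Finset kˣ → S) (I : Finset kˣ) :
    creation h n F I =
      ∑ t ∈ I, ((t ^ n : kˣ) : k) • (zetaProd h t (I.erase t) * F (I.erase t)) := rfl

/-- The factor symmetric in `t` and `s` of the summand for the points `t`, `s` in a product of two
creation operators. -/
def pairTerm (h : S) (F : Finset kˣ → S) (I : Finset kˣ) (t s : kˣ) : S :=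
  let J := (I.erase t).erase s
  zetaProd h t J * zetaProd h s J * F J

theorem pairTerm_comm (h : S) (F : Finset kˣ → S) (I : Finset kˣ) (t s : kˣ) :
    pairTerm h F I t s = pairTerm h F I s t := by
  simp only [pairTerm, Finset.erase_right_comm (a := t), mul_comm (zetaProd h t _)]

theorem creation_creation_apply (h : S) (m n : ℤ) (F : Finset kˣ → S) (I : Finset kˣ) :
    creation h m (creation h n F) I = ∑ t ∈ I, ∑ s ∈ I.erase t,
      ((t ^ m : kˣ) * (s ^ n : kˣ) : k) • (zetaFactor h t s * pairTerm h F I t s) := by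
  rw [creation_apply]
  refine Finset.sum_congr rfl fun t _ => ?_
  rw [creation_apply, Finset.mul_sum, Finset.smul_sum]
  refine Finset.sum_congr rfl fun s hs => ?_
  rw [mul_smul_comm, smul_smul, zetaProd, ← Finset.mul_prod_erase _ _ hs, pairTerm, zetaProd,
    zetaProd]
  simp only [mul_assoc]

theorem creation_currentRelations (h : S) :
    CurrentRelations h (creation h : ℤ → Module.End S (Finset kˣ → S)) := by
  intro m n
  rw [← sub_eq_zero]
  ext F I
  let a (t s : kˣ) : k := (t ^ m : kˣ) * (s ^ n : kˣ) + (t ^ n : kˣ) * (s ^ m : kˣ)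
  have hsum : ∑ t ∈ I, ∑ s ∈ I.erase t,
      a t s • ((((t : k) - s) • zetaFactor h t s - h * zetaFactor h t s) *
        pairTerm h F I t s) = 0 := by
    refine sum_sum_erase_eq_zero I fun t s hts => ?_
    rw [zetaFactor_antisymm h hts, pairTerm_comm, show a t s = a s t by simp only [a]; ring,
      neg_mul, smul_neg, neg_add_cancel]
  rw [LinearMap.zero_apply, Pi.zero_apply, ← hsum]
  simp only [LinearMap.sub_apply, LinearMap.add_apply, LinearMap.smul_apply, Module.End.mul_apply,
    Pi.sub_apply, Pi.add_apply, Pi.smul_apply, creation_creation_apply, smul_eq_mul,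
    ← Finset.sum_add_distrib, ← Finset.sum_sub_distrib, Finset.mul_sum]
  refine Finset.sum_congr rfl fun t _ => Finset.sum_congr rfl fun s _ => ?_
  simp only [a, Algebra.smul_def, zpow_add_one, Units.val_mul, map_mul, map_add, map_sub]
  ring

variable (k S) in
/-- The vacuum of the Fock representation: the function supported on the empty point set. -/
def vacuum : Finset kˣ → S := Pi.single ∅ 1

open PowerSeries in
theorem constantCoeff_creation_apply {h : k⟦X⟧} (hh : constantCoeff h = 0) (n : ℤ)
    (F : Finset kˣ → k⟦X⟧) (I : Finset kˣ) :
    constantCoeff (creation h n F I) =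
      ∑ t ∈ I, ((t ^ n : kˣ) : k) * constantCoeff (F (I.erase t)) := by
  have hweight (t : kˣ) (J : Finset kˣ) : constantCoeff (zetaProd h t J) = 1 := by
    simp [zetaProd, zetaFactor, map_prod, hh]
  simp [creation_apply, hweight]

open PowerSeries in
theorem constantCoeff_word_vacuum {h : k⟦X⟧} (hh : constantCoeff h = 0) (l : List ℕ)
    (I : Finset kˣ) :
    constantCoeff ((l.map fun n : ℕ => creation h (n : ℤ)).prod (vacuum k k⟦X⟧) I) =
      pointPairing I (l.map MvPolynomial.X).prod := by
  induction l generalizing I with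
  | nil =>
    obtain rfl | ⟨t, ht⟩ := I.eq_empty_or_nonempty
    · simp [vacuum, pointPairing_empty]
    · rw [← Finset.insert_erase ht, List.map_nil, List.prod_nil,
        pointPairing_insert (Finset.notMem_erase t I)]
      simp [vacuum]
  | cons n l ih =>
    rw [List.map_cons, List.prod_cons, Module.End.mul_apply, constantCoeff_creation_apply hh,
      List.map_cons, List.prod_cons, pointPairing_X_mul]
    simp only [ih, zpow_natCast, Units.val_pow_eq_pow_val]

end FockRepresentation

section Injectivity

theorem injective_of_linearIndependent_orbit {S A B V ι : Type*} [CommSemiring S]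
    [Semiring A] [Algebra S A] [Semiring B] [Algebra S B] [AddCommMonoid V] [Module S V]
    {φ : A →ₐ[S] B} {ρ : B →ₐ[S] Module.End S V} {v : V} {x : ι → A}
    (hspan : Submodule.span S (Set.range x) = ⊤)
    (hli : LinearIndependent S fun i => ρ (φ (x i)) v) : Function.Injective φ := by
  let orbitMap : B →ₗ[S] V := LinearMap.applyₗ v ∘ₗ ρ.toLinearMap
  have hsurj : Function.Surjective (Finsupp.linearCombination S x) :=
    LinearMap.range_eq_top.1 ((Finsupp.range_linearCombination S).trans hspan)
  have hcomp : (fun i => ρ (φ (x i)) v) = (orbitMap ∘ₗ φ.toLinearMap) ∘ x := rfl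
  rw [hcomp, LinearIndependent, Finsupp.linearCombination_linear_comp] at hli
  have horbit : Function.Injective (orbitMap ∘ φ) := Function.Injective.of_comp_right hli hsurj
  exact Function.Injective.of_comp horbit

/-- The representation of `U` on functions of finite subsets of `ℂˣ` in which `e_n` acts as the
`n`-th creation operator. -/
def fockRep : U →ₐ[R] Module.End R (Finset ℂˣ → R) := liftU (creation_currentRelations hbar)

theorem fockRep_tildeHom_word (l : List ℕ) :
    fockRep (tildeHom (l.map et).prod) =
      (l.map fun n : ℕ => creation hbar (n : ℤ)).prod := by
  simp only [map_list_prod, List.map_map, Function.comp_def, tildeHom_et, fockRep, liftU_e]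

theorem linearIndependent_fockRep_words : LinearIndependent R fun m : Multiset ℕ =>
    fockRep (tildeHom (m.toList.map et).prod) (vacuum ℂ R) := by
  have hhbar : PowerSeries.constantCoeff hbar = 0 := PowerSeries.constantCoeff_X
  refine linearIndependent_of_constantCoeff_s3 ?_
  simp only [fockRep_tildeHom_word, constantCoeff_word_vacuum hhbar]
  exact linearIndependent_pointPairing_words

theorem tildeHom_injective : Function.Injective tildeHom :=
  injective_of_linearIndependent_orbit span_multiset_words_et linearIndependent_fockRep_words

end Injectivity

/-- the `R`-algebra morphism `Ũ^{≥0} → U` determined by `ẽ_n ↦ e_n`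
is injective, and its image is the subalgebra `U^{≥0}`; i.e. the above relations are
defining relations for `U^{≥0}`. -/
theorem exists_algHom_tilde_injective_range_eq :
    ∃ φ : Ut →ₐ[R] U, (∀ n : ℕ, φ (et n) = e (n : ℤ)) ∧
      Function.Injective φ ∧ φ.range = Uge :=
  ⟨tildeHom, tildeHom_et, tildeHom_injective, tildeHom_range⟩

end
end
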